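/- Let μ and ν be probability measures on ℝ^d. If for independent samples X₁, X₂ ~ μ and Y₁, Y₂ ~ ν (all mutually independent), the three random variables ‖X₁ − X₂‖, ‖Y₁ − Y₂‖, and ‖X₁ − Y₁‖ all have the same distribution, and additionally μ and ν have densities f and g with f(x)/g(x) constant wherever both are positive, then μ = ν. -/

import Mathlib

open MeasureTheory ENNReal

/-!
The standard Gaussian `γ` has a radial characteristic function and charges every nonempty open
set. By Fubini, the `L²(γ)` distance between the characteristic functions of `μ` and `ν` is a
combination of integrals of `charFun γ (x - y)` against the products of `μ` and `ν`. Since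
`charFun γ` is radial, these integrals depend only on the laws of the distances, so equal laws
make the `L²(γ)` distance vanish; as characteristic functions are continuous and `γ` has full
support, they then agree everywhere.
-/

open ProbabilityTheory ComplexConjugate

lemma isOpenPosMeasure_gaussianReal (m : ℝ) {v : NNReal} (hv : v ≠ 0) :
    (gaussianReal m v).IsOpenPosMeasure :=
  (gaussianReal_absolutelyContinuous' m hv).isOpenPosMeasure

lemma isOpenPosMeasure_stdGaussian (E : Type*) [NormedAddCommGroup E] [InnerProductSpace ℝ E]
    [FiniteDimensional ℝ E] [MeasurableSpace E] [BorelSpace E] :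
    (stdGaussian E).IsOpenPosMeasure := by
  have := isOpenPosMeasure_gaussianReal 0 one_ne_zero
  refine Continuous.isOpenPosMeasure_map (by fun_prop) fun x ↦ ?_
  exact ⟨(stdOrthonormalBasis ℝ E).repr x, (stdOrthonormalBasis ℝ E).sum_repr x⟩

section CharFun

variable {E : Type*} [NormedAddCommGroup E] [InnerProductSpace ℝ E] [MeasurableSpace E]
  [OpensMeasurableSpace E] [SecondCountableTopology E]

lemma integral_charFun_mul_conj_charFun (γ μ ν : Measure E) [IsFiniteMeasure γ]
    [IsFiniteMeasure μ] [IsFiniteMeasure ν] :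
    ∫ t, charFun μ t * conj (charFun ν t) ∂γ = ∫ p, charFun γ (p.1 - p.2) ∂(μ.prod ν) := by
  have charFun_mul_conj (t : E) : charFun μ t * conj (charFun ν t) =
      ∫ p, Complex.exp (inner ℝ t (p.1 - p.2) * Complex.I) ∂(μ.prod ν) := by
    rw [← charFun_neg, charFun_apply, charFun_apply, ← integral_prod_mul]
    refine integral_congr_ae (.of_forall fun p ↦ ?_)
    simp only [← Complex.exp_add, inner_neg_right, inner_sub_right, real_inner_comm t]
    push_cast
    ring_nf
  have integrable_kernel : Integrable (Function.uncurry fun (t : E) (p : E × E) ↦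
      Complex.exp (inner ℝ t (p.1 - p.2) * Complex.I)) (γ.prod (μ.prod ν)) :=
    (integrable_const (1 : ℝ)).mono (by unfold Function.uncurry; fun_prop)
      (.of_forall fun q ↦ by simp [Function.uncurry, Complex.norm_exp_ofReal_mul_I])
  simp_rw [charFun_mul_conj, charFun_apply]
  exact integral_integral_swap integrable_kernel

lemma integrable_charFun_mul_conj_charFun (γ μ ν : Measure E) [IsFiniteMeasure γ]
    [IsFiniteMeasure μ] [IsFiniteMeasure ν] :
    Integrable (fun t ↦ charFun μ t * conj (charFun ν t)) γ := by
  refine .of_bound (by fun_prop) (μ.real .univ * ν.real .univ) (.of_forall fun t ↦ ?_)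
  rw [norm_mul, RCLike.norm_conj]
  gcongr <;> exact norm_charFun_le t

lemma integral_norm_charFun_sub_sq (γ μ ν : Measure E) [IsFiniteMeasure γ]
    [IsFiniteMeasure μ] [IsFiniteMeasure ν] :
    ((∫ t, ‖charFun μ t - charFun ν t‖ ^ 2 ∂γ : ℝ) : ℂ) =
      ∫ p, charFun γ (p.1 - p.2) ∂(μ.prod μ) - ∫ p, charFun γ (p.1 - p.2) ∂(μ.prod ν) -
        (∫ p, charFun γ (p.1 - p.2) ∂(ν.prod μ) - ∫ p, charFun γ (p.1 - p.2) ∂(ν.prod ν)) := by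
  have integrable := integrable_charFun_mul_conj_charFun γ
  simp_rw [← integral_charFun_mul_conj_charFun]
  rw [← integral_complex_ofReal, ← integral_sub (integrable μ μ) (integrable μ ν),
    ← integral_sub (integrable ν μ) (integrable ν ν), ← integral_sub]
  · refine integral_congr_ae (.of_forall fun t ↦ ?_)
    simp only [Complex.ofReal_pow, ← Complex.mul_conj', map_sub]
    ring
  · exact (integrable μ μ).sub (integrable μ ν)
  · exact (integrable ν μ).sub (integrable ν ν)

end CharFun

section Uniqueness

variable {E : Type*} [NormedAddCommGroup E] [InnerProductSpace ℝ E] [CompleteSpace E]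
  [SecondCountableTopology E] [MeasurableSpace E] [BorelSpace E]

lemma eq_of_charFun_ae_eq {γ μ ν : Measure E} [γ.IsOpenPosMeasure]
    [IsFiniteMeasure μ] [IsFiniteMeasure ν] (h : charFun μ =ᵐ[γ] charFun ν) : μ = ν :=
  Measure.ext_of_charFun (continuous_charFun.ae_eq_iff_eq γ continuous_charFun |>.mp h)

lemma eq_of_integral_norm_charFun_sub_sq_eq_zero {γ μ ν : Measure E}
    [IsFiniteMeasure γ] [γ.IsOpenPosMeasure] [IsFiniteMeasure μ] [IsFiniteMeasure ν]
    (h : ∫ t, ‖charFun μ t - charFun ν t‖ ^ 2 ∂γ = 0) : μ = ν := by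
  have integrable : Integrable (fun t ↦ ‖charFun μ t - charFun ν t‖ ^ 2) γ := by
    refine .of_bound (by fun_prop) ((μ.real .univ + ν.real .univ) ^ 2) (.of_forall fun t ↦ ?_)
    rw [norm_pow, norm_norm]
    gcongr
    exact norm_sub_le_of_le (norm_charFun_le t) (norm_charFun_le t)
  have ae_zero := (integral_eq_zero_iff_of_nonneg (fun _ ↦ by positivity) integrable).mp h
  refine eq_of_charFun_ae_eq (γ := γ) ?_
  filter_upwards [ae_zero] with t ht
  simpa [sub_eq_zero] using ht

end Uniqueness

section DistanceLaw

/-- The law of `dist X Y` for independent `X ~ μ` and `Y ~ ν`. For `μ = ν` it is the distribution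
of the intra-class distance (ICD), in general that of the between-class distance (BCD). -/
noncomputable def distanceLaw {X : Type*} [PseudoMetricSpace X] [MeasurableSpace X]
    (μ ν : Measure X) : Measure ℝ :=
  (μ.prod ν).map fun p ↦ dist p.1 p.2

lemma distanceLaw_comm {X : Type*} [PseudoMetricSpace X] [SecondCountableTopology X]
    [MeasurableSpace X] [OpensMeasurableSpace X] (μ ν : Measure X) [SFinite μ] [SFinite ν] :
    distanceLaw μ ν = distanceLaw ν μ := by
  rw [distanceLaw, ← Measure.prod_swap, Measure.map_map (by fun_prop) measurable_swap]
  simp only [Function.comp_def, Prod.fst_swap, Prod.snd_swap, dist_comm, distanceLaw]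

variable {E : Type*} [NormedAddCommGroup E] [InnerProductSpace ℝ E] [FiniteDimensional ℝ E]
  [MeasurableSpace E] [BorelSpace E]

lemma integral_charFun_stdGaussian_sub (μ ν : Measure E) :
    ∫ p, charFun (stdGaussian E) (p.1 - p.2) ∂(μ.prod ν) =
      ∫ r : ℝ, Complex.exp (-r ^ 2 / 2) ∂(distanceLaw μ ν) := by
  rw [distanceLaw, integral_map (by fun_prop) (by fun_prop)]
  simp_rw [charFun_stdGaussian, dist_eq_norm]

theorem identical_dists_of_icd_bcd_general (μ ν : Measure E)
    [IsFiniteMeasure μ] [IsFiniteMeasure ν]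
    (hxx_yy : distanceLaw μ μ = distanceLaw ν ν)
    (hxx_xy : distanceLaw μ μ = distanceLaw μ ν) : μ = ν := by
  have := isOpenPosMeasure_stdGaussian E
  refine eq_of_integral_norm_charFun_sub_sq_eq_zero (γ := stdGaussian E) ?_
  rw [← Complex.ofReal_eq_zero, integral_norm_charFun_sub_sq]
  simp only [integral_charFun_stdGaussian_sub, distanceLaw_comm ν μ, ← hxx_yy, ← hxx_xy, sub_self]

end DistanceLaw

/-- Necessity direction of Theorem 1: if for independent samples `X₁, X₂ ~ μ` and
`Y₁, Y₂ ~ ν` the intra-class distances `‖X₁ − X₂‖`, `‖Y₁ − Y₂‖` and the between-class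
distance `‖X₁ − Y₁‖` all have the same distribution, and `μ, ν` have densities with
constant ratio wherever both are positive, then `μ = ν`. -/
theorem identical_dists_of_icd_bcd {d : ℕ}
    (μ ν : Measure (EuclideanSpace ℝ (Fin d)))
    [IsProbabilityMeasure μ] [IsProbabilityMeasure ν]
    (f g : EuclideanSpace ℝ (Fin d) → ℝ≥0∞) (hf : Measurable f) (hg : Measurable g)
    (hμ : μ = volume.withDensity f) (hν : ν = volume.withDensity g)
    (hratio : ∃ c : ℝ≥0∞, ∀ x, 0 < f x → 0 < g x → f x = c * g x)
    (hxx_yy : (μ.prod μ).map (fun p => dist p.1 p.2) =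
      (ν.prod ν).map (fun p => dist p.1 p.2))
    (hxx_xy : (μ.prod μ).map (fun p => dist p.1 p.2) =
      (μ.prod ν).map (fun p => dist p.1 p.2)) :
    μ = ν :=
  identical_dists_of_icd_bcd_general μ ν hxx_yy hxx_xy
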